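/- Let F be a field of characteristic zero and let m, n be natural numbers, not both zero. Consider the matrix superalgebra M_{m|n}(F), i.e., the algebra of (m+n)×(m+n) matrices over F, indexed by Fin m ⊕ Fin n, with ℤ/2-grading in which a matrix is even if it preserves the two blocks (both nonzero entries have row and column indices in the same summand) and odd if it exchanges them. Then the F-linear span of the set of supercommutators {XY − (−1)^{|X||Y|}·YX : X, Y homogeneous} equals the kernel of the supertrace map str : M_{m|n}(F) → F, str(X) = Σ_{i ∈ Fin m} X_{ii} − Σ_{j ∈ Fin n} X_{jj}. -/

import Mathlib

/-!
The supertrace kills supercommutators because `str(XY) = (-1)^(|X| |Y|) str(YX)`. Conversely,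
modulo supercommutators every matrix `X` is a multiple of a single diagonal unit `E_oo`: for `a ≠ b`
we have `E_ab = [E_aa, E_ab]`, and `[E_ab, E_ba] = E_aa - (-1)^(|a| + |b|) E_bb` for all `a`, `b`.
The multiple is `(-1)^|o| str X`, so it vanishes as soon as the supertrace does.
-/

open Matrix

section Sign

variable {R : Type*} [Ring R]

theorem neg_one_pow_val_add (x y : ZMod 2) :
    (-1 : R) ^ (x + y).val = (-1) ^ x.val * (-1) ^ y.val := by
  rw [ZMod.val_add, ← neg_one_pow_eq_pow_mod_two, pow_add]

theorem neg_one_pow_val_mul_val_self (x : ZMod 2) :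
    (-1 : R) ^ (x.val * x.val) = (-1) ^ x.val := by
  have hx : x * x = x := by decide +revert
  rw [neg_one_pow_eq_pow_mod_two, ← ZMod.val_mul, hx]

end Sign

section Supermatrix

variable {ι R : Type*}

/-- Homogeneity of parity `ε` in the matrix superalgebra whose index `a` has parity `p a`. The zero
matrix is homogeneous of both parities. -/
def IsHomogeneousOfParity [Zero R] (p : ι → ZMod 2) (ε : ZMod 2) (A : Matrix ι ι R) : Prop :=
  ∀ a b, A a b ≠ 0 → p a + p b = ε

theorem isHomogeneousOfParity_single [DecidableEq ι] [Zero R] (p : ι → ZMod 2) (a b : ι) (x : R) :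
    IsHomogeneousOfParity p (p a + p b) (single a b x) := by
  intro c d hcd
  obtain ⟨rfl, rfl⟩ : a = c ∧ b = d := by
    by_contra h
    exact hcd (single_apply_of_ne _ _ _ _ _ h)
  rfl

variable [Fintype ι] [CommRing R]

/-- The supertrace, as a linear form: the diagonal entry at an index of parity `p a` is counted with
sign `(-1) ^ p a`. -/
def supertrace (R : Type*) [CommRing R] (p : ι → ZMod 2) : Matrix ι ι R →ₗ[R] R :=
  ∑ a, (-1 : R) ^ (p a).val • entryLinearMap R R a a

/-- The supercommutators `Y₁ Y₂ - (-1)^(|Y₁| |Y₂|) Y₂ Y₁` of homogeneous matrices,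
for the grading in which the index `a` has parity `p a`. -/
def supercommutators (R : Type*) [CommRing R] (p : ι → ZMod 2) : Set (Matrix ι ι R) :=
  {Z | ∃ (Y₁ Y₂ : Matrix ι ι R) (ε δ : ZMod 2),
    IsHomogeneousOfParity p ε Y₁ ∧ IsHomogeneousOfParity p δ Y₂ ∧
      Z = Y₁ * Y₂ - (-1 : R) ^ (ε.val * δ.val) • (Y₂ * Y₁)}

theorem supertrace_apply (p : ι → ZMod 2) (A : Matrix ι ι R) :
    supertrace R p A = ∑ a, (-1) ^ (p a).val * A a a := by
  simp [supertrace]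

theorem supertrace_sumElim {κ : Type*} [Fintype κ] (A : Matrix (ι ⊕ κ) (ι ⊕ κ) R) :
    supertrace R (Sum.elim (fun _ => 0) (fun _ => 1)) A =
      trace A.toBlocks₁₁ - trace A.toBlocks₂₂ := by
  simp [supertrace_apply, trace, toBlocks₁₁, toBlocks₂₂, ZMod.val_one, sub_eq_add_neg]

theorem supertrace_single [DecidableEq ι] (p : ι → ZMod 2) (a : ι) (x : R) :
    supertrace R p (single a a x) = (-1) ^ (p a).val * x := by
  rw [supertrace_apply, Finset.sum_eq_single a] <;> simp +contextual [eq_comm]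

theorem supertrace_single_of_ne [DecidableEq ι] (p : ι → ZMod 2) {a b : ι} (hab : a ≠ b) (x : R) :
    supertrace R p (single a b x) = 0 := by
  rw [supertrace_apply]
  refine Finset.sum_eq_zero fun c _ => ?_
  rw [single_apply_of_ne _ _ _ _ _ (by rintro ⟨rfl, rfl⟩; exact hab rfl), mul_zero]

theorem supertrace_mul_comm {p : ι → ZMod 2} {ε δ : ZMod 2} {A B : Matrix ι ι R}
    (hA : IsHomogeneousOfParity p ε A) (hB : IsHomogeneousOfParity p δ B) :
    supertrace R p (A * B) = (-1) ^ (ε.val * δ.val) * supertrace R p (B * A) := by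
  have term_eq (a b : ι) : (-1) ^ (p a).val * (A a b * B b a) =
      (-1) ^ (ε.val * δ.val) * ((-1) ^ (p b).val * (B b a * A a b)) := by
    by_cases hab : A a b = 0
    · simp [hab]
    by_cases hba : B b a = 0
    · simp [hba]
    have sign_eq : (-1 : R) ^ (ε.val * δ.val) = (-1) ^ (p a).val * (-1) ^ (p b).val := by
      rw [← hA a b hab, ← hB b a hba, add_comm (p b), neg_one_pow_val_mul_val_self,
        neg_one_pow_val_add]
    have sign_mul_self : (-1 : R) ^ (p b).val * (-1) ^ (p b).val = 1 := by
      rw [← mul_pow, neg_mul_neg, one_mul, one_pow]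
    rw [sign_eq]
    linear_combination -((-1) ^ (p a).val * A a b * B b a) * sign_mul_self
  simp only [supertrace_apply, mul_apply, Finset.mul_sum, term_eq]
  exact Finset.sum_comm

theorem span_supercommutators_le_ker_supertrace (p : ι → ZMod 2) :
    Submodule.span R (supercommutators R p) ≤ LinearMap.ker (supertrace R p) := by
  rw [Submodule.span_le]
  rintro _ ⟨Y₁, Y₂, ε, δ, hY₁, hY₂, rfl⟩
  simp [supertrace_mul_comm hY₁ hY₂]

theorem single_mem_supercommutators [DecidableEq ι] (p : ι → ZMod 2) {a b : ι} (hab : a ≠ b)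
    (x : R) : single a b x ∈ supercommutators R p := by
  refine ⟨single a a 1, single a b x, _, _, isHomogeneousOfParity_single p a a 1,
    isHomogeneousOfParity_single p a b x, ?_⟩
  simp [single_mul_single_of_ne _ _ _ _ hab.symm]

theorem single_sub_single_mem_supercommutators [DecidableEq ι] (p : ι → ZMod 2) (a b : ι) (x : R) :
    single a a x - single b b ((-1) ^ (p a).val * (-1) ^ (p b).val * x) ∈
      supercommutators R p := by
  refine ⟨single a b x, single b a 1, p a + p b, p a + p b, isHomogeneousOfParity_single p a b x,
    add_comm (p b) (p a) ▸ isHomogeneousOfParity_single p b a 1, ?_⟩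
  simp [neg_one_pow_val_mul_val_self, neg_one_pow_val_add]

theorem sub_single_supertrace_mem_span [DecidableEq ι] (p : ι → ZMod 2) (o : ι)
    (A : Matrix ι ι R) :
    A - single o o ((-1) ^ (p o).val * supertrace R p A) ∈
      Submodule.span R (supercommutators R p) := by
  induction A using Matrix.induction_on' with
  | h_zero => simp
  | h_add A B hA hB => simpa [mul_add, single_add, add_sub_add_comm] using add_mem hA hB
  | h_std_basis a b x =>
    obtain rfl | hab := eq_or_ne a b
    · rw [supertrace_single, ← mul_assoc, mul_comm ((-1) ^ (p o).val)]
      exact Submodule.subset_span (single_sub_single_mem_supercommutators p a o x)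
    · rw [supertrace_single_of_ne p hab, mul_zero, single_zero, sub_zero]
      exact Submodule.subset_span (single_mem_supercommutators p hab x)

theorem span_supercommutators_eq_ker_supertrace_general (p : ι → ZMod 2) :
    Submodule.span R (supercommutators R p) = LinearMap.ker (supertrace R p) := by
  classical
  refine (span_supercommutators_le_ker_supertrace p).antisymm fun A hA => ?_
  rw [LinearMap.mem_ker] at hA
  rcases isEmpty_or_nonempty ι with hι | ⟨⟨o⟩⟩
  · simp [Subsingleton.elim A 0]
  · simpa [hA] using sub_single_supertrace_mem_span p o A

end Supermatrix

/-- in the matrix superalgebra `M_{m|n}(F)` over a field `F` of characteristic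
zero (with `m`, `n` not both zero), the `F`-linear span of the supercommutators
`XY − (−1)^{|X||Y|} YX` of homogeneous matrices `X`, `Y` equals the kernel of the supertrace. -/
theorem span_supercommutators_eq_ker_supertrace
    (F : Type*) [Field F] [CharZero F] (m n : ℕ) (hmn : m ≠ 0 ∨ n ≠ 0)
    (par : Fin m ⊕ Fin n → ZMod 2)
    (hpar : par = Sum.elim (fun _ => (0 : ZMod 2)) (fun _ => (1 : ZMod 2))) :
    ∀ X : Matrix (Fin m ⊕ Fin n) (Fin m ⊕ Fin n) F,
      X ∈ Submodule.span F
          {Z : Matrix (Fin m ⊕ Fin n) (Fin m ⊕ Fin n) F |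
            ∃ (Y₁ Y₂ : Matrix (Fin m ⊕ Fin n) (Fin m ⊕ Fin n) F) (ε δ : ZMod 2),
              (∀ a b, Y₁ a b ≠ 0 → par a + par b = ε) ∧
              (∀ a b, Y₂ a b ≠ 0 → par a + par b = δ) ∧
              Z = Y₁ * Y₂ - ((-1 : F) ^ (ε.val * δ.val)) • (Y₂ * Y₁)} ↔
        (∑ i : Fin m, X (Sum.inl i) (Sum.inl i)) -
            (∑ j : Fin n, X (Sum.inr j) (Sum.inr j)) = 0 := by
  intro X
  subst hpar
  change X ∈ Submodule.span F (supercommutators F _) ↔ trace X.toBlocks₁₁ - trace X.toBlocks₂₂ = 0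
  rw [span_supercommutators_eq_ker_supertrace_general, LinearMap.mem_ker, supertrace_sumElim]
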